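/- Let P = (X, ≺) be a poset with |X| = n elements which has a belt at z ∈ X, and let ω : Low(P) → ℝ_{>0} be a positive weight function on the lower ideals of P satisfying the submodular property. Define q(L) = ω({x ∈ X : L(x) < L(z)}) for each linear extension L, and N_q(k) = Σ_{L ∈ E_k} q(L). Then for every integer 1 < k < n: N_q(k)² ≥ N_q(k−1)·N_q(k+1). -/

import Mathlib

open scoped Classical BigOperators

noncomputable section

variable {X : Type*} [Fintype X] [DecidableEq X] [PartialOrder X]

/-- A linear extension of the poset `X` with `n = |X|` elements, encoded as a bijection
`σ : X ≃ Fin n`; the value `L(x) ∈ {1, …, n}` of the usual description corresponds to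
`(σ x : ℕ) + 1`. -/
def IsLinExt (σ : X ≃ Fin (Fintype.card X)) : Prop :=
  ∀ x y : X, x < y → σ x < σ y

/-- The weighted count `N_ω(k) = Σ_{L ∈ E, L(z) = k} Π_{x : L(x) < L(z)} ω(x)` over linear
extensions placing `z` in position `k`. -/
def Nw (ω : X → ℝ) (z : X) (k : ℕ) : ℝ :=
  ∑ σ ∈ Finset.univ.filter (fun σ : X ≃ Fin (Fintype.card X) =>
      IsLinExt σ ∧ (σ z : ℕ) = k - 1),
    ∏ x ∈ Finset.univ.filter (fun x : X => σ x < σ z), ω x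

/-- A lower ideal (down-closed set) of the poset. -/
def IsLowerIdeal (S : Finset X) : Prop :=
  ∀ x ∈ S, ∀ y : X, y ≤ x → y ∈ S

/-- The set `inc(z)` of elements incomparable to `z`. -/
def incSet (z : X) : Finset X :=
  Finset.univ.filter (fun x => ¬ x ≤ z ∧ ¬ z ≤ x)

/-- The weighted count `N_q(k) = Σ_{L ∈ E, L(z) = k} ω({x : L(x) < L(z)})` over linear
extensions placing `z` in position `k`, where `ω` is a weight on lower ideals. -/
def Nq (ω : Finset X → ℝ) (z : X) (k : ℕ) : ℝ :=
  ∑ σ ∈ Finset.univ.filter (fun σ : X ≃ Fin (Fintype.card X) =>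
      IsLinExt σ ∧ (σ z : ℕ) = k - 1),
    ω (Finset.univ.filter (fun x : X => σ x < σ z))

/-!
Let `e(S)` be the number of linear extensions of a set `S`. A linear extension of the poset is cut
by `z` into linear extensions of a lower ideal `I` and of the complement of `I ∪ {z}`, and the belt
condition leaves only one possible `I` of each size. So `N_q(k)` is a single product
`ω(I) e(I) e((I ∪ {z})ᶜ)`, the ideals for `k - 1`, `k`, `k + 1` are `I ⊂ I + x ⊂ I + x + y` with
`x < y`, and it is enough that each of the three factors is log-concave along this chain.

For `ω` this is the submodular property. For `e` with `x < y`, cutting the linear extensions of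
`S + x + y` at `y` and those of `S + x` at `x` gives
`e(S + x + y) = ∑ e(I + x) e(S \ I)` and `e(S + x) = ∑ e(I) e(S \ I)`, where each `I` of the first
sum also occurs in the second, so that `e(S + x + y) e(S) ≤ e(S + x)²` follows from
`e(I + x) e(S) ≤ e(I) e(S + x)`. The latter is a case of Fishburn's inequality
`e(S) e(T) / (|S|! |T|!) ≤ e(S ∩ T) e(S ∪ T) / (|S ∩ T|! |S ∪ T|!)`, obtained by comparing leading
coefficients of order polynomials, which are log-supermodular in the set by the four functions
theorem. Reversing the order gives the third factor.
-/

/-! ### Linear extensions as lists -/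

section LinearExtensions

variable {α : Type*} {r : α → α → Prop} {S T : Finset α}

/-- Lower ideals of a relation `r`, where `r b a` reads "`b` precedes `a`". Arbitrary relations are
allowed, so that the upper sets of a poset are the down-closed sets of the swapped relation. -/
def IsDownClosed (r : α → α → Prop) (S : Finset α) : Prop :=
  ∀ ⦃a b : α⦄, r b a → a ∈ S → b ∈ S

theorem isDownClosed_empty (r : α → α → Prop) : IsDownClosed r ∅ := fun _ _ _ ha =>
  absurd ha (Finset.notMem_empty _)

theorem IsDownClosed.compl [Fintype α] [DecidableEq α] (hS : IsDownClosed r S) :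
    IsDownClosed (Function.swap r) Sᶜ := fun _ _ hab ha =>
  Finset.mem_compl.2 fun hb => Finset.mem_compl.1 ha (hS hab hb)

variable [DecidableEq α]

theorem IsDownClosed.inter (hS : IsDownClosed r S) (hT : IsDownClosed r T) :
    IsDownClosed r (S ∩ T) := fun _ _ hba ha =>
  Finset.mem_inter.2 ((Finset.mem_inter.1 ha).imp (hS hba) (hT hba))

theorem IsDownClosed.union (hS : IsDownClosed r S) (hT : IsDownClosed r T) :
    IsDownClosed r (S ∪ T) := fun _ _ hba ha =>
  Finset.mem_union.2 ((Finset.mem_union.1 ha).imp (hS hba) (hT hba))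

/-- The linear extensions of `r` restricted to `S`, each written as the list of the elements of `S`
in increasing order. -/
def listLinExt (r : α → α → Prop) (S : Finset α) : Finset (List α) :=
  {l ∈ S.val.lists.toFinset | l.Pairwise fun a b => ¬ r b a}

/-- The number of linear extensions of `r` restricted to `S`. -/
def numLinExt (r : α → α → Prop) (S : Finset α) : ℕ := (listLinExt r S).card

/-- The possible sets of predecessors of `a` in a linear extension of `r` restricted to `S`, when
`S` is down-closed and contains `a`. -/
def cuts (r : α → α → Prop) (S : Finset α) (a : α) : Finset (Finset α) :=
  {I ∈ (S.erase a).powerset | IsDownClosed r I ∧ IsDownClosed r (insert a I)}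

/-- The elements that come before the first occurrence of `a` in `l`. -/
def predecessors (a : α) (l : List α) : Finset α := (l.take (l.idxOf a)).toFinset

theorem mem_listLinExt {l : List α} :
    l ∈ listLinExt r S ↔ l.Nodup ∧ l.toFinset = S ∧ l.Pairwise fun a b => ¬ r b a := by
  have h : S.val = l ↔ l.Nodup ∧ l.toFinset = S := by
    refine ⟨fun h => ?_, ?_⟩
    · have hl : l.Nodup := Multiset.coe_nodup.1 (h ▸ S.nodup)
      exact ⟨hl, Finset.val_injective (by rw [h, List.toFinset_val, hl.dedup])⟩
    · rintro ⟨hl, rfl⟩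
      rw [List.toFinset_val, hl.dedup]
  rw [listLinExt, Finset.mem_filter, Multiset.mem_toFinset, Multiset.mem_lists_iff,
    ← and_assoc, ← h]
  rfl

theorem mem_cuts {a : α} {I : Finset α} :
    I ∈ cuts r S a ↔ I ⊆ S.erase a ∧ IsDownClosed r I ∧ IsDownClosed r (insert a I) := by
  rw [cuts, Finset.mem_filter, Finset.mem_powerset]

theorem predecessors_append_cons {a : α} {l₁ l₂ : List α} (ha : a ∉ l₁) :
    predecessors a (l₁ ++ a :: l₂) = l₁.toFinset := by
  simp [predecessors, List.idxOf_append_of_notMem ha]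

theorem append_cons_mem_listLinExt (hS : IsDownClosed r S) {a : α} (ha : a ∈ S) {l₁ l₂ : List α} :
    l₁ ++ a :: l₂ ∈ listLinExt r S ↔ l₁.toFinset ∈ cuts r S a ∧
      l₁ ∈ listLinExt r l₁.toFinset ∧ l₂ ∈ listLinExt r (S \ insert a l₁.toFinset) := by
  simp only [mem_listLinExt, mem_cuts, IsDownClosed, List.nodup_append, List.nodup_cons,
    List.pairwise_append, List.pairwise_cons, Finset.ext_iff, Finset.subset_iff, List.mem_toFinset,
    Finset.mem_erase, Finset.mem_insert, Finset.mem_sdiff, List.mem_append, List.mem_cons] at hS ⊢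
  constructor
  · rintro ⟨⟨hn₁, hn₂, hdisj⟩, hmem, hp₁, hp₂, hcross⟩
    refine ⟨⟨?_, ?_, ?_⟩, ⟨hn₁, trivial, hp₁⟩, hn₂.2, ?_, hp₂.2⟩ <;> grind
  · rintro ⟨⟨hsub, hI, haI⟩, ⟨hn₁, -, hp₁⟩, hn₂, hmem, hp₂⟩
    refine ⟨⟨hn₁, ⟨?_, hn₂⟩, ?_⟩, ?_, hp₁, ⟨?_, hp₂⟩, ?_⟩ <;> grind

theorem mem_iff_of_mem_listLinExt {l : List α} (hl : l ∈ listLinExt r S) {a : α} :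
    a ∈ l ↔ a ∈ S := by
  rw [← (mem_listLinExt.1 hl).2.1, List.mem_toFinset]

theorem predecessors_mem_cuts (hS : IsDownClosed r S) {a : α} (ha : a ∈ S) {l : List α}
    (hl : l ∈ listLinExt r S) : predecessors a l ∈ cuts r S a := by
  obtain ⟨l₁, l₂, rfl, hal₁⟩ := List.eq_append_cons_of_mem ((mem_iff_of_mem_listLinExt hl).2 ha)
  rw [predecessors_append_cons hal₁]
  exact ((append_cons_mem_listLinExt hS ha).1 hl).1

theorem card_filter_predecessors_eq (hS : IsDownClosed r S) {a : α} (ha : a ∈ S) {I : Finset α}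
    (hI : I ∈ cuts r S a) :
    ({l ∈ listLinExt r S | predecessors a l = I} : Finset (List α)).card =
      numLinExt r I * numLinExt r (S \ insert a I) := by
  have notMem_left : ∀ {l}, l ∈ listLinExt r I → a ∉ l := fun hl hal =>
    Finset.notMem_erase a S ((mem_cuts.1 hI).1 ((mem_iff_of_mem_listLinExt hl).1 hal))
  have notMem_right : ∀ {l}, l ∈ listLinExt r (S \ insert a I) → a ∉ l := fun hl hal =>
    (Finset.mem_sdiff.1 ((mem_iff_of_mem_listLinExt hl).1 hal)).2 (Finset.mem_insert_self a I)
  rw [numLinExt, numLinExt, ← Finset.card_product]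
  symm
  refine Finset.card_bij (fun p _ => p.1 ++ a :: p.2) ?_ ?_ ?_
  · rintro ⟨l₁, l₂⟩ hl
    rw [Finset.mem_product] at hl
    have hal₁ := notMem_left hl.1
    obtain rfl := (mem_listLinExt.1 hl.1).2.1
    exact Finset.mem_filter.2
      ⟨(append_cons_mem_listLinExt hS ha).2 ⟨hI, hl⟩, predecessors_append_cons hal₁⟩
  · rintro ⟨l₁, l₂⟩ hl ⟨m₁, m₂⟩ - h
    rw [Finset.mem_product] at hl
    obtain ⟨rfl, -, rfl⟩ :=
      (List.append_cons_inj_of_notMem (notMem_left hl.1) (notMem_right hl.2)).1 h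
    rfl
  · intro l hl
    obtain ⟨hlS, rfl⟩ := Finset.mem_filter.1 hl
    obtain ⟨l₁, l₂, rfl, hal₁⟩ :=
      List.eq_append_cons_of_mem ((mem_iff_of_mem_listLinExt hlS).2 ha)
    rw [predecessors_append_cons hal₁]
    exact ⟨(l₁, l₂), Finset.mem_product.2 ((append_cons_mem_listLinExt hS ha).1 hlS).2, rfl⟩

theorem sum_predecessors {M : Type*} [AddCommMonoid M] (hS : IsDownClosed r S) {a : α} (ha : a ∈ S)
    (f : Finset α → M) :
    ∑ l ∈ listLinExt r S, f (predecessors a l) =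
      ∑ I ∈ cuts r S a, (numLinExt r I * numLinExt r (S \ insert a I)) • f I := by
  rw [← Finset.sum_fiberwise_of_maps_to fun _ => predecessors_mem_cuts hS ha]
  refine Finset.sum_congr rfl fun I hI => ?_
  rw [Finset.sum_congr rfl fun l hl => congrArg f (Finset.mem_filter.1 hl).2, Finset.sum_const,
    card_filter_predecessors_eq hS ha hI]

theorem numLinExt_eq_sum_cuts (hS : IsDownClosed r S) {a : α} (ha : a ∈ S) :
    numLinExt r S = ∑ I ∈ cuts r S a, numLinExt r I * numLinExt r (S \ insert a I) := by
  have h := sum_predecessors hS ha fun _ => 1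
  simp only [smul_eq_mul, mul_one] at h
  rwa [← Finset.card_eq_sum_ones] at h

theorem numLinExt_empty : numLinExt r ∅ = 1 := by
  have h : listLinExt r (∅ : Finset α) = {[]} := by
    ext l
    rw [mem_listLinExt, Finset.mem_singleton, List.toFinset_eq_empty_iff]
    exact ⟨fun h => h.2.1, by rintro rfl; exact ⟨List.nodup_nil, rfl, List.Pairwise.nil⟩⟩
  rw [numLinExt, h, Finset.card_singleton]

theorem numLinExt_swap (r : α → α → Prop) (S : Finset α) :
    numLinExt (Function.swap r) S = numLinExt r S := by
  refine Finset.card_bij' (fun l _ => l.reverse) (fun l _ => l.reverse) ?_ ?_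
    (fun l _ => l.reverse_reverse) (fun l _ => l.reverse_reverse) <;>
  · intro l
    simp only [mem_listLinExt, List.nodup_reverse, List.toFinset_reverse, List.pairwise_reverse]
    exact id

theorem concat_mem_listLinExt (hS : IsDownClosed r S) {a : α} (ha : a ∈ S) {l : List α} :
    l ++ [a] ∈ listLinExt r S ↔ IsDownClosed r (S.erase a) ∧ l ∈ listLinExt r (S.erase a) := by
  rw [append_cons_mem_listLinExt hS ha, mem_cuts, mem_listLinExt (S := _ \ _)]
  constructor
  · rintro ⟨⟨hsub, hI, -⟩, hl, -, hnil, -⟩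
    rw [List.toFinset_nil, eq_comm, Finset.sdiff_eq_empty_iff_subset] at hnil
    have h : l.toFinset = S.erase a := hsub.antisymm (Finset.subset_insert_iff.1 hnil)
    exact h ▸ ⟨hI, hl⟩
  · rintro ⟨hI, hl⟩
    rw [(mem_listLinExt.1 hl).2.1, Finset.insert_erase ha, Finset.sdiff_self]
    exact ⟨⟨subset_rfl, hI, hS⟩, hl, List.nodup_nil, rfl, List.Pairwise.nil⟩

theorem numLinExt_eq_sum_erase (hS : IsDownClosed r S) (hne : S.Nonempty) :
    numLinExt r S =
      ∑ a ∈ S with IsDownClosed r (S.erase a), numLinExt r (S.erase a) := by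
  simp only [numLinExt]
  rw [← Finset.card_sigma]
  symm
  refine Finset.card_bij (fun p _ => p.2 ++ [p.1]) ?_ ?_ ?_
  · rintro ⟨a, l⟩ hl
    obtain ⟨ha, hl⟩ := Finset.mem_sigma.1 hl
    obtain ⟨ha, hI⟩ := Finset.mem_filter.1 ha
    exact (concat_mem_listLinExt hS ha).2 ⟨hI, hl⟩
  · rintro ⟨a, l⟩ - ⟨b, m⟩ - h
    obtain ⟨rfl, ⟨⟩⟩ := List.append_inj' h rfl
    rfl
  · intro l hl
    obtain rfl | ⟨m, a, rfl⟩ := List.eq_nil_or_concat' l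
    · obtain ⟨a, ha⟩ := hne
      exact absurd ((mem_iff_of_mem_listLinExt hl).2 ha) List.not_mem_nil
    · have ha : a ∈ S := (mem_iff_of_mem_listLinExt hl).1 (by simp)
      obtain ⟨hI, hm⟩ := (concat_mem_listLinExt hS ha).1 hl
      exact ⟨⟨a, m⟩, Finset.mem_sigma.2 ⟨Finset.mem_filter.2 ⟨ha, hI⟩, hm⟩, rfl⟩

/-! ### Order polynomials and Fishburn's inequality -/

/-- The number of chains `∅ = S₀ ⊆ S₁ ⊆ ⋯ ⊆ Sₙ = S` in which `S₁, …, Sₙ` are down-closed. As a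
function of `n` this is the order polynomial of `r` restricted to a down-closed `S`. -/
def orderPolynomial (r : α → α → Prop) : ℕ → Finset α → ℕ
  | 0, S => if S = ∅ then 1 else 0
  | n + 1, S => if IsDownClosed r S then ∑ T ∈ S.powerset, orderPolynomial r n T else 0

/-- The number of chains `∅ = S₀ ⊂ S₁ ⊂ ⋯ ⊂ Sₖ = S` in which `S₁, …, Sₖ` are down-closed. These
are the coefficients of the order polynomial in the basis of binomial coefficients. -/
def numStrictChains (r : α → α → Prop) : ℕ → Finset α → ℕ
  | 0, S => if S = ∅ then 1 else 0
  | k + 1, S => if IsDownClosed r S then ∑ T ∈ S.ssubsets, numStrictChains r k T else 0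

theorem orderPolynomial_mul_le (r : α → α → Prop) (n : ℕ) (S T : Finset α) :
    orderPolynomial r n S * orderPolynomial r n T ≤
      orderPolynomial r n (S ∩ T) * orderPolynomial r n (S ∪ T) := by
  induction n generalizing S T with
  | zero =>
    by_cases hS : S = ∅ <;> by_cases hT : T = ∅ <;> simp [orderPolynomial, hS, hT]
  | succ n ih =>
    by_cases hS : IsDownClosed r S
    · by_cases hT : IsDownClosed r T
      · simp only [orderPolynomial, if_pos hS, if_pos hT, if_pos (hS.inter hT),
          if_pos (hS.union hT), Finset.powerset_inter, Finset.powerset_union]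
        exact four_functions_theorem _ _ _ _ zero_le zero_le zero_le zero_le ih _ _
      · simp [orderPolynomial, hT]
    · simp [orderPolynomial, hS]

theorem numStrictChains_eq_zero_of_card_lt {k : ℕ} (hk : S.card < k) :
    numStrictChains r k S = 0 := by
  induction k generalizing S with
  | zero => exact absurd hk (Nat.not_lt_zero _)
  | succ k ih =>
    rw [numStrictChains, Finset.sum_eq_zero, ite_self]
    intro T hT
    have := Finset.card_lt_card (Finset.mem_ssubsets.1 hT)
    exact ih (by omega)

theorem numStrictChains_eq_zero_of_not_isDownClosed (hS : ¬ IsDownClosed r S) (k : ℕ) :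
    numStrictChains r k S = 0 := by
  cases k with
  | zero => exact if_neg fun h : S = ∅ => hS (h ▸ isDownClosed_empty r)
  | succ k => exact if_neg hS

theorem numStrictChains_card (hS : IsDownClosed r S) :
    numStrictChains r S.card S = numLinExt r S := by
  induction hk : S.card generalizing S with
  | zero =>
    rw [Finset.card_eq_zero.1 hk, numLinExt_empty, numStrictChains, if_pos rfl]
  | succ k ih =>
    have card_erase : ∀ a ∈ S, (S.erase a).card = k := fun a ha => by
      rw [Finset.card_erase_of_mem ha, hk, Nat.add_sub_cancel]
    rw [numLinExt_eq_sum_erase hS (Finset.card_pos.1 (by omega)), numStrictChains, if_pos hS,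
      Finset.sum_congr rfl fun a ha => (ih (Finset.mem_filter.1 ha).2
        (card_erase a (Finset.mem_filter.1 ha).1)).symm,
      ← Finset.sum_image (f := numStrictChains r k) (g := S.erase)
        ((Finset.erase_injOn S).mono (Finset.filter_subset _ _))]
    refine (Finset.sum_subset ?_ fun T hT hTS => ?_).symm
    · refine Finset.image_subset_iff.2 fun a ha => ?_
      exact Finset.mem_ssubsets.2 (Finset.erase_ssubset (Finset.mem_filter.1 ha).1)
    · obtain ⟨a, ha, hTa⟩ :=
        Finset.ssubset_iff_exists_subset_erase.1 (Finset.mem_ssubsets.1 hT)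
      by_cases hTD : IsDownClosed r T
      · refine numStrictChains_eq_zero_of_card_lt (card_erase a ha ▸ Finset.card_lt_card ?_)
        refine hTa.ssubset_of_ne fun h => hTS (Finset.mem_image.2 ⟨a, ?_, h.symm⟩)
        exact Finset.mem_filter.2 ⟨ha, h ▸ hTD⟩
      · exact numStrictChains_eq_zero_of_not_isDownClosed hTD k

theorem orderPolynomial_succ (hS : IsDownClosed r S) (n : ℕ) :
    orderPolynomial r (n + 1) S =
      orderPolynomial r n S + ∑ T ∈ S.ssubsets, orderPolynomial r n T := by
  rw [orderPolynomial, if_pos hS, ← Finset.insert_erase (Finset.mem_powerset_self S),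
    Finset.sum_insert (Finset.notMem_erase _ _)]
  rfl

theorem orderPolynomial_eq_sum_choose (n : ℕ) {M : ℕ} (hM : S.card < M) :
    orderPolynomial r n S = ∑ k ∈ Finset.range M, n.choose k * numStrictChains r k S := by
  induction n generalizing S M with
  | zero =>
    rw [Finset.sum_eq_single_of_mem 0 (Finset.mem_range.2 (by omega))]
    · simp [orderPolynomial, numStrictChains]
    · intro k _ hk
      rw [Nat.choose_eq_zero_of_lt (Nat.pos_of_ne_zero hk), zero_mul]
  | succ n ih =>
    by_cases hS : IsDownClosed r S
    · obtain ⟨M, rfl⟩ : ∃ m, M = m + 1 := ⟨M - 1, by omega⟩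
      have hsum : ∑ T ∈ S.ssubsets, orderPolynomial r n T =
          ∑ k ∈ Finset.range M, n.choose k * numStrictChains r (k + 1) S := by
        simp only [numStrictChains, if_pos hS, Finset.mul_sum]
        rw [Finset.sum_comm]
        refine Finset.sum_congr rfl fun T hT => ih ?_
        have := Finset.card_lt_card (Finset.mem_ssubsets.1 hT)
        omega
      rw [orderPolynomial_succ hS, ih hM, hsum, Finset.sum_range_succ', Finset.sum_range_succ']
      simp only [Nat.choose_succ_succ, add_mul, Finset.sum_add_distrib, Nat.choose_zero_right]
      ring
    · rw [orderPolynomial, if_neg hS, Finset.sum_eq_zero]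
      exact fun k _ => by rw [numStrictChains_eq_zero_of_not_isDownClosed hS, mul_zero]

theorem tendsto_choose_div_pow {k s : ℕ} (h : k ≤ s) :
    Filter.Tendsto (fun n : ℕ => (n.choose k : ℝ) / (n : ℝ) ^ s) Filter.atTop
      (nhds (if k = s then 1 / (s.factorial : ℝ) else 0)) := by
  have hone : Filter.Tendsto (fun n : ℕ => (n : ℝ) * (n : ℝ)⁻¹) Filter.atTop (nhds 1) := by
    refine tendsto_const_nhds.congr' ?_
    filter_upwards [Filter.eventually_gt_atTop 0] with n hn
    rw [mul_inv_cancel₀ (by positivity)]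
  have hlim := (ProbabilityTheory.tendsto_choose_mul_pow_atTop k hone).mul
    (tendsto_inv_atTop_nhds_zero_nat (𝕜 := ℝ).pow (s - k))
  convert hlim using 2 with n
  · rw [mul_assoc, ← pow_add, Nat.add_sub_cancel' h, inv_pow, div_eq_mul_inv]
  · split_ifs with hks
    · rw [hks, one_pow, Nat.sub_self, pow_zero, mul_one]
    · rw [zero_pow (by omega), mul_zero]

theorem tendsto_orderPolynomial_div_pow (hS : IsDownClosed r S) :
    Filter.Tendsto (fun n : ℕ => (orderPolynomial r n S : ℝ) / (n : ℝ) ^ S.card) Filter.atTop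
      (nhds ((numLinExt r S : ℝ) / (S.card.factorial : ℝ))) := by
  have hlim := tendsto_finsetSum (Finset.range (S.card + 1)) fun k hk =>
    (tendsto_choose_div_pow (Nat.le_of_lt_succ (Finset.mem_range.1 hk))).mul_const
      (numStrictChains r k S : ℝ)
  convert hlim using 2 with n
  · rw [orderPolynomial_eq_sum_choose n (Nat.lt_succ_self _), Nat.cast_sum, Finset.sum_div]
    exact Finset.sum_congr rfl fun k _ => by push_cast; ring
  · rw [Finset.sum_eq_single_of_mem S.card (Finset.self_mem_range_succ _)
      fun k _ hk => by rw [if_neg hk, zero_mul], if_pos rfl, numStrictChains_card hS]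
    ring

theorem numLinExt_div_factorial_mul_le (hS : IsDownClosed r S) (hT : IsDownClosed r T) :
    (numLinExt r S / S.card.factorial : ℝ) * (numLinExt r T / T.card.factorial) ≤
      numLinExt r (S ∩ T) / (S ∩ T).card.factorial *
        (numLinExt r (S ∪ T) / (S ∪ T).card.factorial) := by
  refine le_of_tendsto_of_tendsto'
    ((tendsto_orderPolynomial_div_pow hS).mul (tendsto_orderPolynomial_div_pow hT))
    ((tendsto_orderPolynomial_div_pow (hS.inter hT)).mul
      (tendsto_orderPolynomial_div_pow (hS.union hT))) fun n => ?_
  rw [div_mul_div_comm, div_mul_div_comm, ← pow_add, ← pow_add, Finset.card_inter_add_card_union]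
  refine div_le_div_of_nonneg_right ?_ (by positivity)
  exact_mod_cast orderPolynomial_mul_le r n S T

theorem numLinExt_insert_mul_le {I J : Finset α} {x : α} (hI : IsDownClosed r (insert x I))
    (hJ : IsDownClosed r J) (hIJ : I ⊆ J) (hx : x ∉ J) :
    numLinExt r (insert x I) * numLinExt r J ≤ numLinExt r I * numLinExt r (insert x J) := by
  have h := numLinExt_div_factorial_mul_le hI hJ
  rw [Finset.insert_inter_of_notMem hx, Finset.inter_eq_left.2 hIJ, Finset.insert_union,
    Finset.union_eq_right.2 hIJ, Finset.card_insert_of_notMem fun h => hx (hIJ h),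
    Finset.card_insert_of_notMem hx, Nat.factorial_succ, Nat.factorial_succ, div_mul_div_comm,
    div_mul_div_comm, div_le_div_iff₀ (by positivity) (by positivity)] at h
  norm_cast at h
  have hcard : I.card + 1 ≤ J.card + 1 := Nat.succ_le_succ (Finset.card_le_card hIJ)
  refine Nat.le_of_mul_le_mul_right (c := (J.card + 1) * (I.card.factorial * J.card.factorial)) ?_
    (by positivity)
  calc _ = _ := by ring
    _ ≤ _ := h
    _ = numLinExt r I * numLinExt r (insert x J) *
          ((I.card + 1) * (I.card.factorial * J.card.factorial)) := by ring
    _ ≤ _ := by gcongr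

/-! ### Log-concavity -/

theorem erase_mem_cuts {x y : α} (hS : IsDownClosed r S) (hx : x ∉ S) (hy : y ∉ insert x S)
    (hxy : r x y) {I : Finset α} (hI : I ∈ cuts r (insert y (insert x S)) y) :
    x ∈ I ∧ I.erase x ∈ cuts r (insert x S) x := by
  obtain ⟨hIS, hID, hyI⟩ := mem_cuts.1 hI
  rw [Finset.erase_insert hy] at hIS
  have hxI : x ∈ I := (Finset.mem_insert.1 (hyI hxy (Finset.mem_insert_self y I))).resolve_left
    fun h => hy (h ▸ Finset.mem_insert_self x S)
  have hinter : I.erase x = I ∩ S := by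
    rw [← Finset.erase_insert hx, Finset.inter_erase, Finset.inter_eq_left.2 hIS]
  refine ⟨hxI, mem_cuts.2 ⟨Finset.erase_subset_erase x hIS, ?_, ?_⟩⟩
  · exact hinter ▸ hID.inter hS
  · rwa [Finset.insert_erase hxI]

theorem numLinExt_insert_insert_mul_le {x y : α} (hS : IsDownClosed r S)
    (hSx : IsDownClosed r (insert x S)) (hSxy : IsDownClosed r (insert y (insert x S)))
    (hx : x ∉ S) (hy : y ∉ insert x S) (hxy : r x y) :
    numLinExt r (insert y (insert x S)) * numLinExt r S ≤ numLinExt r (insert x S) ^ 2 := by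
  have herase := fun I hI => erase_mem_cuts hS hx hy hxy (I := I) hI
  have hinj : Set.InjOn (Finset.erase · x) (cuts r (insert y (insert x S)) y : Set (Finset α)) :=
    (Finset.erase_injOn' x).mono fun I hI => (herase I hI).1
  have term_le : ∀ I ∈ cuts r (insert y (insert x S)) y,
      numLinExt r I * numLinExt r (insert y (insert x S) \ insert y I) * numLinExt r S ≤
        numLinExt r (I.erase x) * numLinExt r (insert x S \ insert x (I.erase x)) *
          numLinExt r (insert x S) := fun I hI => by
    obtain ⟨hxI, hIx⟩ := herase I hI
    obtain ⟨hIS, -, hIxD⟩ := mem_cuts.1 hIx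
    rw [Finset.erase_insert hx] at hIS
    rw [Finset.insert_sdiff_insert, Finset.sdiff_insert_of_notMem hy, Finset.insert_erase hxI]
    have h := numLinExt_insert_mul_le hIxD hS hIS hx
    rw [Finset.insert_erase hxI] at h
    calc _ = numLinExt r I * numLinExt r S * numLinExt r (insert x S \ I) := by ring
      _ ≤ numLinExt r (I.erase x) * numLinExt r (insert x S) * numLinExt r (insert x S \ I) := by
        gcongr
      _ = _ := by ring
  calc numLinExt r (insert y (insert x S)) * numLinExt r S
      = ∑ I ∈ cuts r (insert y (insert x S)) y,
          numLinExt r I * numLinExt r (insert y (insert x S) \ insert y I) * numLinExt r S := by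
        rw [numLinExt_eq_sum_cuts hSxy (Finset.mem_insert_self y _), Finset.sum_mul]
    _ ≤ ∑ I ∈ cuts r (insert y (insert x S)) y,
          numLinExt r (I.erase x) * numLinExt r (insert x S \ insert x (I.erase x)) *
            numLinExt r (insert x S) := Finset.sum_le_sum term_le
    _ = ∑ I ∈ (cuts r (insert y (insert x S)) y).image (Finset.erase · x),
          numLinExt r I * numLinExt r (insert x S \ insert x I) * numLinExt r (insert x S) := by
        rw [Finset.sum_image hinj]
    _ ≤ ∑ I ∈ cuts r (insert x S) x,
          numLinExt r I * numLinExt r (insert x S \ insert x I) * numLinExt r (insert x S) :=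
        Finset.sum_le_sum_of_subset (Finset.image_subset_iff.2 fun I hI => (herase I hI).2)
    _ = numLinExt r (insert x S) ^ 2 := by
        rw [← Finset.sum_mul, ← numLinExt_eq_sum_cuts hSx (Finset.mem_insert_self x S), sq]

theorem numLinExt_compl_mul_compl_insert_insert_le [Fintype α] {x y : α} (hS : IsDownClosed r S)
    (hSx : IsDownClosed r (insert x S)) (hSxy : IsDownClosed r (insert y (insert x S)))
    (hx : x ∉ S) (hy : y ∉ insert x S) (hxy : r x y) :
    numLinExt r Sᶜ * numLinExt r (insert y (insert x S))ᶜ ≤ numLinExt r (insert x S)ᶜ ^ 2 := by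
  have hyS : insert y (insert y (insert x S))ᶜ = (insert x S)ᶜ := Finset.insert_compl_insert hy
  have hxS : insert x (insert x S)ᶜ = Sᶜ := Finset.insert_compl_insert hx
  rw [← numLinExt_swap r Sᶜ, ← numLinExt_swap r (insert x S)ᶜ,
    ← numLinExt_swap r (insert y (insert x S))ᶜ, ← hxS, ← hyS]
  refine numLinExt_insert_insert_mul_le hSxy.compl ?_ ?_ ?_ ?_ hxy
  · exact hyS ▸ hSx.compl
  · rw [hyS, hxS]; exact hS.compl
  · simp
  · rw [hyS]; simp

theorem insert_mem_cuts {a x y : α} {I : Finset α} (hI : I ∈ cuts r S a)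
    (hIxy : insert y (insert x I) ∈ cuts r S a) (hyx : ¬ r y x) : insert x I ∈ cuts r S a := by
  obtain ⟨-, hID, haI⟩ := mem_cuts.1 hI
  obtain ⟨hIxyS, hIxyD, -⟩ := mem_cuts.1 hIxy
  have hIxD : IsDownClosed r (insert x I) := fun b c hcb hb => by
    obtain rfl | hb := Finset.mem_insert.1 hb
    · exact Finset.mem_of_mem_insert_of_ne
        (hIxyD hcb (Finset.mem_insert_of_mem (Finset.mem_insert_self b I)))
        fun h => hyx (h ▸ hcb)
    · exact Finset.mem_insert_of_mem (hID hcb hb)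
  have hunion : insert a (insert x I) = insert x I ∪ insert a I := by
    rw [Finset.union_insert, Finset.union_eq_left.2 (Finset.subset_insert x I)]
  exact mem_cuts.2 ⟨(Finset.subset_insert y _).trans hIxyS, hIxD, hunion ▸ hIxD.union haI⟩

/-- The number of linear extensions of `r` on the whole type in which the cut `I` is the set of
predecessors of `a`. -/
def numLinExtCut [Fintype α] (r : α → α → Prop) (a : α) (I : Finset α) : ℕ :=
  numLinExt r I * numLinExt r (insert a I)ᶜ

theorem numLinExtCut_log_concave [Fintype α] {a x y : α} {I : Finset α}
    (hI : I ∈ cuts r Finset.univ a) (hIx : insert x I ∈ cuts r Finset.univ a)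
    (hIxy : insert y (insert x I) ∈ cuts r Finset.univ a)
    (hx : x ∉ I) (hy : y ∉ insert x I) (hxy : r x y) :
    numLinExtCut r a (insert y (insert x I)) * numLinExtCut r a I ≤
      numLinExtCut r a (insert x I) ^ 2 := by
  obtain ⟨-, hID, haI⟩ := mem_cuts.1 hI
  obtain ⟨-, hIxD, haIx⟩ := mem_cuts.1 hIx
  obtain ⟨hIxya, hIxyD, haIxy⟩ := mem_cuts.1 hIxy
  have hxa : x ≠ a := Finset.ne_of_mem_erase (hIxya (by simp))
  have hya : y ≠ a := Finset.ne_of_mem_erase (hIxya (by simp))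
  have hlow := numLinExt_insert_insert_mul_le hID hIxD hIxyD hx hy hxy
  have hup : numLinExt r (insert a I)ᶜ * numLinExt r (insert a (insert y (insert x I)))ᶜ ≤
      numLinExt r (insert a (insert x I))ᶜ ^ 2 := by
    rw [Finset.insert_comm a x] at haIx ⊢
    rw [Finset.insert_comm a y, Finset.insert_comm a x] at haIxy ⊢
    refine numLinExt_compl_mul_compl_insert_insert_le haI haIx haIxy ?_ ?_ hxy
    · rw [Finset.mem_insert, not_or]
      exact ⟨hxa, hx⟩
    · rw [Finset.insert_comm, Finset.mem_insert, not_or]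
      exact ⟨hya, hy⟩
  calc _ = numLinExt r (insert y (insert x I)) * numLinExt r I *
        (numLinExt r (insert a I)ᶜ * numLinExt r (insert a (insert y (insert x I)))ᶜ) := by
        rw [numLinExtCut, numLinExtCut]; ring
    _ ≤ numLinExt r (insert x I) ^ 2 * numLinExt r (insert a (insert x I))ᶜ ^ 2 :=
        Nat.mul_le_mul hlow hup
    _ = _ := (mul_pow _ _ 2).symm

end LinearExtensions

/-! ### Linear extensions as bijections onto `Fin n` -/

section Enumerations

variable {α : Type*} [Fintype α]

theorem exists_ofFn_symm_eq {l : List α} (hl : l.Nodup) (hmem : ∀ a, a ∈ l) :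
    ∃ σ : α ≃ Fin (Fintype.card α), List.ofFn σ.symm = l := by
  let e := hl.getEquivOfForallMemList l hmem
  have hlen : l.length = Fintype.card α := by rw [← Fintype.card_congr e, Fintype.card_fin]
  refine ⟨e.symm.trans (finCongr hlen), List.ext_getElem (by simp [hlen]) fun i _ _ => ?_⟩
  simp [e]

theorem nodup_ofFn_symm (σ : α ≃ Fin (Fintype.card α)) : (List.ofFn σ.symm).Nodup :=
  List.nodup_ofFn.2 σ.symm.injective

theorem mem_ofFn_symm (σ : α ≃ Fin (Fintype.card α)) (a : α) : a ∈ List.ofFn σ.symm :=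
  List.mem_ofFn.2 (σ.symm.surjective a)

theorem idxOf_ofFn_symm [DecidableEq α] (σ : α ≃ Fin (Fintype.card α)) (a : α) :
    (List.ofFn σ.symm).idxOf a = σ a := by
  have h := (nodup_ofFn_symm σ).idxOf_getElem (σ a) (by simp)
  rwa [List.getElem_ofFn, Fin.eta, Equiv.symm_apply_apply] at h

theorem filter_lt_eq_predecessors [DecidableEq α] (σ : α ≃ Fin (Fintype.card α)) (a : α) :
    ({x | σ x < σ a} : Finset α) = predecessors a (List.ofFn σ.symm) := by
  ext x
  rw [Finset.mem_filter_univ, predecessors, List.mem_toFinset,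
    List.mem_take_iff_idxOf_lt (mem_ofFn_symm σ x), idxOf_ofFn_symm, idxOf_ofFn_symm, Fin.lt_def]

theorem card_predecessors_ofFn_symm [DecidableEq α] (σ : α ≃ Fin (Fintype.card α)) (a : α) :
    (predecessors a (List.ofFn σ.symm)).card = σ a := by
  rw [predecessors,
    List.toFinset_card_of_nodup ((nodup_ofFn_symm σ).sublist (List.take_sublist _ _)),
    List.length_take, idxOf_ofFn_symm, List.length_ofFn, min_eq_left (σ a).2.le]

end Enumerations

/-! ### Positions of `z` and belts -/

theorem isDownClosed_lt_iff {α : Type*} [PartialOrder α] {S : Finset α} :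
    IsDownClosed (· < ·) S ↔ IsLowerIdeal S :=
  ⟨fun h _ hx _ hyx => hyx.lt_or_eq.elim (fun hlt => h hlt hx) (fun heq => heq ▸ hx),
    fun h _ _ hba ha => h _ ha _ hba.le⟩

theorem isLowerIdeal_of_mem_cuts {α : Type*} [DecidableEq α] [PartialOrder α] {z : α}
    {S I : Finset α} (hI : I ∈ cuts (· < ·) S z) : IsLowerIdeal I :=
  isDownClosed_lt_iff.1 (mem_cuts.1 hI).2.1

theorem ofFn_symm_mem_listLinExt_iff {σ : X ≃ Fin (Fintype.card X)} :
    List.ofFn σ.symm ∈ listLinExt (· < ·) Finset.univ ↔ IsLinExt σ := by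
  have huniv : (List.ofFn σ.symm).toFinset = Finset.univ :=
    Finset.eq_univ_of_forall fun x => List.mem_toFinset.2 (mem_ofFn_symm σ x)
  rw [mem_listLinExt, List.pairwise_ofFn]
  constructor
  · rintro ⟨-, -, h⟩ x y hxy
    refine lt_of_not_ge fun hle => h (hle.lt_of_ne fun heq => hxy.ne (σ.injective heq).symm) ?_
    rwa [σ.symm_apply_apply, σ.symm_apply_apply]
  · intro hσ
    refine ⟨nodup_ofFn_symm σ, huniv, fun i j hij hji => hij.asymm ?_⟩
    simpa only [σ.apply_symm_apply] using hσ _ _ hji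

theorem Nq_eq_sum_listLinExt (ω : Finset X → ℝ) (z : X) (k : ℕ) :
    Nq ω z k = ∑ l ∈ listLinExt (· < ·) Finset.univ with (predecessors z l).card = k - 1,
      ω (predecessors z l) := by
  refine Finset.sum_bij (fun σ _ => List.ofFn σ.symm) ?_ ?_ ?_ ?_
  · intro σ hσ
    rw [Finset.mem_filter_univ] at hσ
    rwa [Finset.mem_filter, ofFn_symm_mem_listLinExt_iff, card_predecessors_ofFn_symm]
  · intro σ _ τ _ h
    exact Equiv.symm_bijective.injective (DFunLike.coe_injective (List.ofFn_injective h))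
  · intro l hl
    obtain ⟨hl, hk⟩ := Finset.mem_filter.1 hl
    obtain ⟨σ, rfl⟩ := exists_ofFn_symm_eq (mem_listLinExt.1 hl).1 fun x =>
      (mem_iff_of_mem_listLinExt hl).2 (Finset.mem_univ x)
    rw [ofFn_symm_mem_listLinExt_iff] at hl
    rw [card_predecessors_ofFn_symm] at hk
    exact ⟨σ, (Finset.mem_filter_univ _).2 ⟨hl, hk⟩, rfl⟩
  · intro σ _
    rw [filter_lt_eq_predecessors]

theorem Nq_eq_sum_cuts (ω : Finset X → ℝ) (z : X) (k : ℕ) :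
    Nq ω z k = ∑ I ∈ cuts (· < ·) Finset.univ z with I.card = k - 1,
      numLinExtCut (· < ·) z I * ω I := by
  have huniv : IsDownClosed (· < ·) (Finset.univ : Finset X) := fun _ _ _ _ => Finset.mem_univ _
  rw [Nq_eq_sum_listLinExt, Finset.sum_filter, Finset.sum_filter, sum_predecessors huniv
    (Finset.mem_univ z) fun I => if I.card = k - 1 then ω I else 0]
  refine Finset.sum_congr rfl fun I _ => ?_
  rw [nsmul_eq_mul, mul_ite, mul_zero, numLinExtCut, Finset.compl_eq_univ_sdiff]

/-- The poset has a belt at `z`: the elements incomparable to `z` form a chain. -/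
def HasBelt (z : X) : Prop := ∀ x ∈ incSet z, ∀ y ∈ incSet z, x ≤ y ∨ y ≤ x

theorem exists_cut_of_Nq_ne_zero {ω : Finset X → ℝ} {z : X} {k : ℕ} (h : Nq ω z k ≠ 0) :
    ∃ I ∈ cuts (· < ·) Finset.univ z, I.card = k - 1 := by
  rw [Nq_eq_sum_cuts] at h
  obtain ⟨I, hI, -⟩ := Finset.exists_ne_zero_of_sum_ne_zero h
  exact ⟨I, Finset.mem_filter.1 hI⟩

theorem mem_incSet_of_mem_cuts {z x : X} {I J : Finset X} (hI : I ∈ cuts (· < ·) Finset.univ z)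
    (hJ : J ∈ cuts (· < ·) Finset.univ z) (hxI : x ∈ I) (hxJ : x ∉ J) : x ∈ incSet z := by
  have hzJ : IsDownClosed (· < ·) (insert z J) := (mem_cuts.1 hJ).2.2
  have hzI : z ∉ I := fun h => Finset.notMem_erase z _ ((mem_cuts.1 hI).1 h)
  refine (Finset.mem_filter_univ x).2 ⟨fun hxz => ?_, fun hzx => ?_⟩
  · obtain hlt | rfl := hxz.lt_or_eq
    · exact hxJ (Finset.mem_of_mem_insert_of_ne (hzJ hlt (Finset.mem_insert_self z J)) hlt.ne)
    · exact hzI hxI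
  · exact hzI (isLowerIdeal_of_mem_cuts hI x hxI z hzx)

theorem subset_of_mem_cuts_of_card_le {z : X} (hbelt : HasBelt z) {I J : Finset X}
    (hI : I ∈ cuts (· < ·) Finset.univ z) (hJ : J ∈ cuts (· < ·) Finset.univ z)
    (hIJ : I.card ≤ J.card) : I ⊆ J := by
  by_contra hsub
  obtain ⟨x, hxI, hxJ⟩ := Finset.not_subset.1 hsub
  obtain ⟨y, hyJ, hyI⟩ := Finset.not_subset.1 fun h : J ⊆ I =>
    hsub (Finset.eq_of_subset_of_card_le h hIJ).ge
  obtain hxy | hyx := hbelt x (mem_incSet_of_mem_cuts hI hJ hxI hxJ) y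
    (mem_incSet_of_mem_cuts hJ hI hyJ hyI)
  · exact hxJ (isLowerIdeal_of_mem_cuts hJ y hyJ x hxy)
  · exact hyI (isLowerIdeal_of_mem_cuts hI x hxI y hyx)

theorem Nq_eq_of_mem_cuts (ω : Finset X → ℝ) {z : X} (hbelt : HasBelt z) {I : Finset X}
    (hI : I ∈ cuts (· < ·) Finset.univ z) {k : ℕ} (hk : I.card = k - 1) :
    Nq ω z k = numLinExtCut (· < ·) z I * ω I := by
  rw [Nq_eq_sum_cuts, Finset.sum_eq_single_of_mem I (Finset.mem_filter.2 ⟨hI, hk⟩)]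
  intro J hJ hJI
  obtain ⟨hJ, hJk⟩ := Finset.mem_filter.1 hJ
  exact absurd (Finset.eq_of_subset_of_card_le
    (subset_of_mem_cuts_of_card_le hbelt hJ hI (hJk.trans hk.symm).le)
    (hk.trans hJk.symm).le) hJI

theorem exists_eq_insert_insert_of_card_eq {z : X} (hbelt : HasBelt z) {I J : Finset X}
    (hI : I ∈ cuts (· < ·) Finset.univ z) (hJ : J ∈ cuts (· < ·) Finset.univ z)
    (hIJ : J.card = I.card + 2) :
    ∃ x ∈ incSet z, ∃ y ∈ incSet z, x < y ∧ x ∉ I ∧ y ∉ insert x I ∧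
      J = insert y (insert x I) := by
  have hsub : I ⊆ J := subset_of_mem_cuts_of_card_le hbelt hI hJ (by omega)
  have hinc : ∀ x ∈ J \ I, x ∈ incSet z := fun x hx =>
    mem_incSet_of_mem_cuts hJ hI (Finset.mem_sdiff.1 hx).1 (Finset.mem_sdiff.1 hx).2
  obtain ⟨x, y, hne, hJI⟩ := Finset.card_eq_two.1
    (show (J \ I).card = 2 by rw [Finset.card_sdiff_of_subset hsub]; omega)
  have hx : x ∈ J \ I := hJI ▸ Finset.mem_insert_self x {y}
  have hy : y ∈ J \ I := hJI ▸ Finset.mem_insert_of_mem (Finset.mem_singleton_self y)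
  wlog hxy : x < y generalizing x y
  · refine this y x hne.symm (hJI.trans (Finset.pair_comm x y)) hy hx ?_
    exact ((hbelt x (hinc x hx) y (hinc y hy)).resolve_left
      fun hle => hxy (hle.lt_of_ne hne)).lt_of_ne hne.symm
  refine ⟨x, hinc x hx, y, hinc y hy, hxy, (Finset.mem_sdiff.1 hx).2, ?_, ?_⟩
  · rw [Finset.mem_insert, not_or]
    exact ⟨hne.symm, (Finset.mem_sdiff.1 hy).2⟩
  · rw [← Finset.sdiff_union_of_subset hsub, hJI, Finset.insert_union, Finset.singleton_union,
      Finset.insert_comm]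

theorem submodular_stanley_inequality_belt_general
    {z : X}
    (hbelt : HasBelt z)
    {ω : Finset X → ℝ}
    (hsub : ∀ x y : X, x ∈ incSet z → y ∈ incSet z → x < y →
      ∀ S : Finset X, IsLowerIdeal S → IsLowerIdeal (insert x S) →
        IsLowerIdeal (insert y (insert x S)) →
        ω (insert y (insert x S)) * ω S ≤ (ω (insert x S)) ^ 2)
    {k : ℕ} (hk : 1 < k) :
    Nq ω z (k - 1) * Nq ω z (k + 1) ≤ (Nq ω z k) ^ 2 := by
  by_cases hne : Nq ω z (k - 1) * Nq ω z (k + 1) = 0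
  · exact hne ▸ sq_nonneg _
  obtain ⟨I, hI, hIk⟩ := exists_cut_of_Nq_ne_zero (left_ne_zero_of_mul hne)
  obtain ⟨J, hJ, hJk⟩ := exists_cut_of_Nq_ne_zero (right_ne_zero_of_mul hne)
  obtain ⟨x, hxz, y, hyz, hxy, hxI, hyI, rfl⟩ :=
    exists_eq_insert_insert_of_card_eq hbelt hI hJ (by omega)
  have hIx := insert_mem_cuts hI hJ hxy.asymm
  have hIxk : (insert x I).card = k - 1 := by rw [Finset.card_insert_of_notMem hxI]; omega
  have hω := hsub x y hxz hyz hxy I (isLowerIdeal_of_mem_cuts hI)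
    (isLowerIdeal_of_mem_cuts hIx) (isLowerIdeal_of_mem_cuts hJ)
  have hcount : (numLinExtCut (· < ·) z (insert y (insert x I)) * numLinExtCut (· < ·) z I : ℝ) ≤
      numLinExtCut (· < ·) z (insert x I) ^ 2 :=
    mod_cast numLinExtCut_log_concave hI hIx hJ hxI hyI hxy
  rw [Nq_eq_of_mem_cuts ω hbelt hI hIk, Nq_eq_of_mem_cuts ω hbelt hJ hJk,
    Nq_eq_of_mem_cuts ω hbelt hIx hIxk]
  linarith [mul_le_mul hω hcount (by positivity) (sq_nonneg _)]

/-- **Submodular Stanley inequality for posets with belts.**  Suppose `P` has a belt at `z`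
(the elements incomparable to `z` form a chain), and `ω` is a positive weight function on
lower ideals satisfying the submodular property.  Then `N_q(k)² ≥ N_q(k-1)·N_q(k+1)` for
all `1 < k < n`. -/
theorem submodular_stanley_inequality_belt
    (z : X)
    (hbelt : ∀ x ∈ incSet z, ∀ y ∈ incSet z, x ≤ y ∨ y ≤ x)
    (ω : Finset X → ℝ)
    (hω : ∀ S : Finset X, IsLowerIdeal S → 0 < ω S)
    (hsub : ∀ x y : X, x ∈ incSet z → y ∈ incSet z → x < y →
      ∀ S : Finset X, IsLowerIdeal S → IsLowerIdeal (insert x S) →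
        IsLowerIdeal (insert y (insert x S)) →
        ω (insert y (insert x S)) * ω S ≤ (ω (insert x S)) ^ 2)
    (k : ℕ) (hk1 : 1 < k) (hk2 : k < Fintype.card X) :
    Nq ω z (k - 1) * Nq ω z (k + 1) ≤ (Nq ω z k) ^ 2 :=
  submodular_stanley_inequality_belt_general hbelt hsub hk1
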